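/- For any sequence γ=(γ_q)_{q≥1} of real numbers, the set of α∈[0,1] such that ‖qα−γ_q‖ < 1/q for infinitely many q∈ℕ has Lebesgue measure 1. -/

import Mathlib

open MeasureTheory

/-- Distance from a real number to the nearest integer. -/
noncomputable def distNearestInt (x : ℝ) : ℝ := |x - round x|

/-!
Choose infinitely many pairwise coprime `q`, such as the primes, and let `E q` be the set of points
`x` of the circle with `‖q x - γ_q‖ < ψ q`. If `q` and `r` are coprime, then `E r` is invariant
under translation by the `r`-torsion, while the points `q (x + u)`, with `u` running through the
`r`-torsion, are `1/r`-separated. Packing them into an interval of length `|E q|` and averaging over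
`u` gives `|E q ∩ E r| ≤ |E q| |E r| + |E r| / r`. For fixed `r` the error terms with `q < r` add
up to at most `|E r|`, so the number of events `E q` that occur, over any finite set of `q`, has
variance at most three times its mean. By Chebyshev's inequality, infinitely many of them occur
almost surely as soon as `∑ |E q|` diverges; for primes and `ψ q = 1 / q` this is the divergence of
`∑ 1 / p`.
-/

open Metric ProbabilityTheory Set
open scoped Finset

lemma sum_ite_lt_div_le {ι : Type*} {n : ι → ℕ} (hn : n.Injective) (s : Finset ι) (k : ℕ) {b : ℝ}
    (hb : 0 ≤ b) : ∑ i ∈ s, (if n i < k then b / k else 0) ≤ b := by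
  have hcard : #{i ∈ s | n i < k} ≤ k := by
    simpa using Finset.card_le_card_of_injOn (t := Finset.range k) n
      (fun i hi ↦ by simpa using (Finset.mem_filter.1 hi).2) hn.injOn
  calc ∑ i ∈ s, (if n i < k then b / k else 0) = #{i ∈ s | n i < k} * (b / k) := by
        rw [← Finset.sum_filter, Finset.sum_const, nsmul_eq_mul]
    _ ≤ k * (b / k) := by gcongr
    _ ≤ b := by
        rw [mul_div_left_comm]
        exact mul_le_of_le_one_right hb (div_self_le_one _)

section SecondMoment

variable {Ω ι : Type*} {E : ι → Set Ω}

/-- The number of events `E i`, `i ∈ s`, that occur at `ω`. It is real-valued so that it can serve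
as a random variable with a mean and a variance. -/
noncomputable def eventCount (E : ι → Set Ω) (s : Finset ι) (ω : Ω) : ℝ :=
  ∑ i ∈ s, (E i).indicator 1 ω

lemma eventCount_eq_card (s : Finset ι) (ω : Ω) [DecidablePred fun i ↦ ω ∈ E i] :
    eventCount E s ω = #{i ∈ s | ω ∈ E i} := by
  simp [eventCount, indicator_apply, Finset.sum_boole]

variable [MeasurableSpace Ω] {μ : Measure Ω}

section FiniteMeasure

variable [IsFiniteMeasure μ]

lemma sum_measureReal_inter_le_mul {B : Set Ω} {s : Finset ι} {M : ℝ}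
    (hE : ∀ i, MeasurableSet (E i)) (hB : MeasurableSet B)
    (hM : ∀ ω ∈ B, eventCount E s ω ≤ M) :
    ∑ i ∈ s, μ.real (E i ∩ B) ≤ M * μ.real B := by
  have hint : ∀ i ∈ s, IntegrableOn ((E i).indicator (1 : Ω → ℝ)) B μ := fun i _ ↦
    (integrable_const 1).indicator (hE i)
  calc ∑ i ∈ s, μ.real (E i ∩ B) = ∫ ω in B, eventCount E s ω ∂μ := by
        simp only [eventCount, integral_finsetSum s hint, integral_indicator_one (hE _),
          measureReal_restrict_apply (hE _)]
    _ ≤ ∫ _ in B, M ∂μ :=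
        setIntegral_mono_on (integrable_finsetSum s hint) (integrable_const M) hB hM
    _ = M * μ.real B := by rw [setIntegral_const, smul_eq_mul, mul_comm]

lemma memLp_indicator_one {A : Set Ω} (hA : MeasurableSet A) (p : ENNReal) :
    MemLp (A.indicator (1 : Ω → ℝ)) p μ :=
  (memLp_const 1).indicator hA

lemma memLp_eventCount (hE : ∀ i, MeasurableSet (E i)) (s : Finset ι) (p : ENNReal) :
    MemLp (eventCount E s) p μ :=
  memLp_finsetSum s fun i _ ↦ memLp_indicator_one (hE i) p

lemma integral_eventCount (hE : ∀ i, MeasurableSet (E i)) (s : Finset ι) :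
    μ[eventCount E s] = ∑ i ∈ s, μ.real (E i) := by
  simp only [eventCount]
  rw [integral_finsetSum s fun i _ ↦ (memLp_indicator_one (hE i) 1).integrable le_rfl]
  exact Finset.sum_congr rfl fun i _ ↦ integral_indicator_one (hE i)

lemma measureReal_setOf_le_le_of_two_mul_le_mean {X : Ω → ℝ} (hX : MemLp X 2 μ) {K : ℝ}
    (hpos : 0 < μ[X]) (hK : 2 * K ≤ μ[X]) :
    μ.real {ω | X ω ≤ K} ≤ Var[X; μ] / (μ[X] / 2) ^ 2 := by
  have hsub : {ω | X ω ≤ K} ⊆ {ω | μ[X] / 2 ≤ |X ω - μ[X]|} := by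
    intro ω (hω : X ω ≤ K)
    rw [mem_ofPred_eq, le_abs']
    left
    linarith
  exact ENNReal.toReal_le_of_le_ofReal (div_nonneg (variance_nonneg _ _) (sq_nonneg _))
    ((measure_mono hsub).trans (meas_ge_le_variance_div_sq hX (half_pos hpos)))

lemma measureReal_forall_eventCount_le_eq_zero (hE : ∀ i, MeasurableSet (E i)) {C : ℝ}
    (hvar : ∀ s, Var[eventCount E s; μ] ≤ C * ∑ i ∈ s, μ.real (E i))
    (hdiv : ¬ Summable fun i ↦ μ.real (E i)) (K : ℝ) :
    μ.real {ω | ∀ s, eventCount E s ω ≤ K} = 0 := by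
  set b := μ.real {ω | ∀ s, eventCount E s ω ≤ K}
  by_contra hne
  have hb0 : 0 < b := lt_of_le_of_ne measureReal_nonneg (Ne.symm hne)
  obtain ⟨s, hs⟩ : ∃ s : Finset ι, max 0 (max (2 * K) (4 * C / b)) < ∑ i ∈ s, μ.real (E i) := by
    by_contra! hle
    exact hdiv (summable_of_sum_le (fun _ ↦ measureReal_nonneg) hle)
  specialize hvar s
  rw [← integral_eventCount hE] at hs hvar
  set m := μ[eventCount E s]
  obtain ⟨hm0, hmK, hmb⟩ : 0 < m ∧ 2 * K < m ∧ 4 * C / b < m := by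
    simpa only [max_lt_iff] using hs
  have hbm : b ≤ 4 * C / m := calc
    b ≤ μ.real {ω | eventCount E s ω ≤ K} := measureReal_mono fun ω hω ↦ hω s
    _ ≤ Var[eventCount E s; μ] / (m / 2) ^ 2 :=
      measureReal_setOf_le_le_of_two_mul_le_mean (memLp_eventCount hE s 2) hm0 hmK.le
    _ ≤ C * m / (m / 2) ^ 2 := by gcongr
    _ = 4 * C / m := by field_simp; ring
  rw [div_lt_iff₀ hb0] at hmb
  rw [le_div_iff₀ hm0] at hbm
  linarith

theorem ae_infinite_of_variance_eventCount_le (hE : ∀ i, MeasurableSet (E i)) {C : ℝ}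
    (hvar : ∀ s, Var[eventCount E s; μ] ≤ C * ∑ i ∈ s, μ.real (E i))
    (hdiv : ¬ Summable fun i ↦ μ.real (E i)) :
    ∀ᵐ ω ∂μ, {i | ω ∈ E i}.Infinite := by
  have hunbounded : ∀ᵐ ω ∂μ, ∀ K : ℕ, ¬ ∀ s, eventCount E s ω ≤ K :=
    ae_all_iff.2 fun K ↦ measure_eq_zero_iff_ae_notMem.1 <|
      (measureReal_eq_zero_iff).1 (measureReal_forall_eventCount_le_eq_zero hE hvar hdiv K)
  filter_upwards [hunbounded] with ω hω hfin
  classical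
  refine hω #hfin.toFinset fun s ↦ ?_
  rw [eventCount_eq_card]
  gcongr
  intro i hi
  simpa using (Finset.mem_filter.1 hi).2

end FiniteMeasure

variable [IsProbabilityMeasure μ]

lemma covariance_indicator_one {A B : Set Ω} (hA : MeasurableSet A) (hB : MeasurableSet B) :
    cov[A.indicator (1 : Ω → ℝ), B.indicator 1; μ] = μ.real (A ∩ B) - μ.real A * μ.real B := by
  rw [covariance_eq_sub (memLp_indicator_one hA 2) (memLp_indicator_one hB 2),
    ← inter_indicator_one, integral_indicator_one (hA.inter hB), integral_indicator_one hA,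
    integral_indicator_one hB]

lemma variance_eventCount (hE : ∀ i, MeasurableSet (E i)) (s : Finset ι) :
    Var[eventCount E s; μ] =
      ∑ i ∈ s, ∑ j ∈ s, (μ.real (E i ∩ E j) - μ.real (E i) * μ.real (E j)) := by
  simp_rw [← covariance_indicator_one (hE _) (hE _)]
  exact variance_fun_sum' fun i _ ↦ memLp_indicator_one (hE i) 2

lemma variance_eventCount_le_of_overlap_le (hE : ∀ i, MeasurableSet (E i)) {n : ι → ℕ}
    (hn : n.Injective)
    (hoverlap : ∀ i j, i ≠ j →
      μ.real (E i ∩ E j) ≤ μ.real (E i) * μ.real (E j) + μ.real (E j) / n j)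
    (s : Finset ι) :
    Var[eventCount E s; μ] ≤ 3 * ∑ i ∈ s, μ.real (E i) := by
  classical
  set v : ι → ℝ := fun i ↦ μ.real (E i)
  set below : ι → ι → ℝ := fun i j ↦ if n i < n j then v j / n j else 0
  have hv : ∀ i, 0 ≤ v i := fun _ ↦ measureReal_nonneg
  have hcov : ∀ i j, μ.real (E i ∩ E j) - v i * v j ≤
      below i j + below j i + if i = j then v i else 0 := by
    intro i j
    rcases lt_trichotomy (n i) (n j) with h | h | h
    · have := hoverlap i j (ne_of_apply_ne n h.ne)
      simp only [below, h, h.not_gt, ne_of_apply_ne n h.ne, if_true, if_false]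
      linarith
    · obtain rfl := hn h
      simp only [below, lt_irrefl, if_true, if_false, inter_self]
      linarith [mul_self_nonneg (v i)]
    · have := hoverlap j i (ne_of_apply_ne n h.ne)
      rw [inter_comm] at this
      simp only [below, h, h.not_gt, ne_of_apply_ne n h.ne', if_true, if_false]
      linarith
  have hbelow : ∑ i ∈ s, ∑ j ∈ s, below j i ≤ ∑ i ∈ s, v i :=
    Finset.sum_le_sum fun i _ ↦ sum_ite_lt_div_le hn s (n i) (hv i)
  calc Var[eventCount E s; μ] = ∑ i ∈ s, ∑ j ∈ s, (μ.real (E i ∩ E j) - v i * v j) :=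
        variance_eventCount hE s
    _ ≤ ∑ i ∈ s, ∑ j ∈ s, (below i j + below j i + if i = j then v i else 0) :=
        Finset.sum_le_sum fun i _ ↦ Finset.sum_le_sum fun j _ ↦ hcov i j
    _ = 2 * ∑ i ∈ s, ∑ j ∈ s, below j i + ∑ i ∈ s, v i := by
        simp only [Finset.sum_add_distrib, Finset.sum_comm (f := below), Finset.sum_ite_eq,
          Finset.sum_ite_mem, Finset.inter_self]
        ring
    _ ≤ 3 * ∑ i ∈ s, v i := by linarith

end SecondMoment

section Averaging

variable {G ι : Type*} [AddCommGroup G] [MeasurableSpace G] [MeasurableAdd G]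
  {μ : Measure G} [μ.IsAddLeftInvariant] [IsFiniteMeasure μ]

lemma card_mul_measureReal_inter_le_of_translates {A B : Set G} (hA : MeasurableSet A)
    (hB : MeasurableSet B) {s : Finset ι} {g : ι → G} {M : ℝ}
    (hinv : ∀ i ∈ s, (g i + ·) ⁻¹' B = B)
    (hM : ∀ x, eventCount (fun i ↦ (g i + ·) ⁻¹' A) s x ≤ M) :
    #s * μ.real (A ∩ B) ≤ M * μ.real B := by
  have htranslate : ∀ i ∈ s, μ.real ((g i + ·) ⁻¹' A ∩ B) = μ.real (A ∩ B) := by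
    intro i hi
    conv_lhs => rw [← hinv i hi, ← preimage_inter]
    rw [measureReal_def, measure_preimage_add, measureReal_def]
  calc #s * μ.real (A ∩ B) = ∑ i ∈ s, μ.real ((g i + ·) ⁻¹' A ∩ B) := by
        rw [Finset.sum_congr rfl htranslate, Finset.sum_const, nsmul_eq_mul]
    _ ≤ M * μ.real B :=
        sum_measureReal_inter_le_mul (fun i ↦ measurable_const_add (g i) hA) hB fun x _ ↦ hM x

end Averaging

section Circle

lemma volumeReal_ball_unitAddCircle (c : UnitAddCircle) {δ : ℝ} (hδ : 0 ≤ δ) :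
    volume.real (ball c δ) = min 1 (2 * δ) := by
  rw [measureReal_def, ← measure_congr AddCircle.closedBall_ae_eq_ball,
    AddCircle.volume_closedBall, ENNReal.toReal_ofReal (by positivity)]

lemma card_mul_le_volumeReal_ball_add {ι : Type*} {s : Finset ι} {y : ι → UnitAddCircle}
    {c : UnitAddCircle} {δ ε : ℝ} (hδ : 0 ≤ δ) (hε0 : 0 ≤ ε) (hε1 : ε ≤ 1)
    (hmem : ∀ i ∈ s, y i ∈ ball c δ)
    (hsep : (s : Set ι).Pairwise fun i j ↦ ε ≤ dist (y i) (y j)) :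
    #s * ε ≤ volume.real (ball c δ) + ε := by
  have hdisj : (s : Set ι).PairwiseDisjoint fun i ↦ ball (y i) (ε / 2) := fun i hi j hj hij ↦
    ball_disjoint_ball (by linarith [hsep hi hj hij])
  have hsub : ⋃ i ∈ s, ball (y i) (ε / 2) ⊆ ball c (δ + ε / 2) :=
    iUnion₂_subset fun i hi ↦ ball_subset_ball' (by linarith [mem_ball.1 (hmem i hi)])
  have hball : ∀ i, volume.real (ball (y i) (ε / 2)) = ε := fun i ↦ by
    rw [volumeReal_ball_unitAddCircle _ (by positivity), mul_div_cancel₀ _ two_ne_zero,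
      min_eq_right hε1]
  calc #s * ε = ∑ i ∈ s, volume.real (ball (y i) (ε / 2)) := by
        simp only [hball, Finset.sum_const, nsmul_eq_mul]
    _ = volume.real (⋃ i ∈ s, ball (y i) (ε / 2)) :=
        (measureReal_biUnion_finset hdisj fun _ _ ↦ measurableSet_ball).symm
    _ ≤ volume.real (ball c (δ + ε / 2)) := measureReal_mono hsub
    _ = min 1 (2 * δ + ε) := by
        rw [volumeReal_ball_unitAddCircle _ (by positivity)]
        ring_nf
    _ ≤ min 1 (2 * δ) + ε := by
        rw [← min_add_add_right]
        exact min_le_min_right _ (by linarith)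
    _ = volume.real (ball c δ) + ε := by rw [volumeReal_ball_unitAddCircle c hδ]

lemma inv_le_norm_of_nsmul_eq_zero {u : UnitAddCircle} (hu : u ≠ 0) {r : ℕ} (hr : 0 < r)
    (hru : r • u = 0) : (r : ℝ)⁻¹ ≤ ‖u‖ := by
  have hfin : IsOfFinAddOrder u := isOfFinAddOrder_iff_nsmul_eq_zero.2 ⟨r, hr, hru⟩
  have hle : addOrderOf u ≤ r := addOrderOf_le_of_nsmul_eq_zero hr hru
  rw [inv_le_iff_one_le_mul₀' (by positivity)]
  calc (1 : ℝ) ≤ addOrderOf u • ‖u‖ := AddCircle.le_add_order_smul_norm_of_isOfFinAddOrder hfin hu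
    _ ≤ r * ‖u‖ := by rw [nsmul_eq_mul]; gcongr

/-- The points `x` of the circle for which the multiple `q • x` is `δ`-close to the target `c`;
these are the events to which the second moment method is applied. -/
def approxSet (q : ℕ) (c : UnitAddCircle) (δ : ℝ) : Set UnitAddCircle := {x | q • x ∈ ball c δ}

lemma measurableSet_approxSet (q : ℕ) (c : UnitAddCircle) (δ : ℝ) :
    MeasurableSet (approxSet q c δ) :=
  (isOpen_ball.preimage (continuous_nsmul q)).measurableSet

lemma volumeReal_approxSet {q : ℕ} (hq : q ≠ 0) (c : UnitAddCircle) (δ : ℝ) :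
    volume.real (approxSet q c δ) = volume.real (ball c δ) := by
  have hpres : MeasurePreserving (fun x : UnitAddCircle ↦ q • x) volume volume := by
    simpa using
      Measure.measurePreserving_zsmul (volume : Measure UnitAddCircle) (Nat.cast_ne_zero.2 hq)
  exact hpres.measureReal_preimage measurableSet_ball.nullMeasurableSet

lemma preimage_add_approxSet {r : ℕ} {u : UnitAddCircle} (hu : r • u = 0) (c : UnitAddCircle)
    (δ : ℝ) : (u + ·) ⁻¹' approxSet r c δ = approxSet r c δ := by
  ext x
  simp [approxSet, smul_add, hu]

lemma inv_le_dist_nsmul_translates {q r : ℕ} (hqr : q.Coprime r) (hr : 0 < r)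
    {t : UnitAddCircle} (ht : addOrderOf t = r) (x : UnitAddCircle) {i j : ℕ} (hi : i < r)
    (hj : j < r) (hij : i ≠ j) :
    (r : ℝ)⁻¹ ≤ dist (q • (i • t + x)) (q • (j • t + x)) := by
  have hne : i • t - j • t ≠ 0 := sub_ne_zero.2 fun h ↦ hij <|
    nsmul_injOn_Iio_addOrderOf (by rwa [ht]) (by rwa [ht]) h
  have htorsion : r • (i • t - j • t) = 0 := by
    have hrt : r • t = 0 := ht ▸ addOrderOf_nsmul_eq_zero t
    rw [nsmul_sub, smul_comm r i t, smul_comm r j t, hrt, nsmul_zero, nsmul_zero, sub_zero]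
  rw [dist_eq_norm, ← nsmul_sub, add_sub_add_right_eq_sub]
  refine inv_le_norm_of_nsmul_eq_zero (fun h ↦ hne ?_) hr ?_
  · exact (nsmul_eq_zero_iff_of_coprime hqr).1 ⟨h, htorsion⟩
  · rw [smul_comm r q, htorsion, nsmul_zero]

lemma eventCount_translates_approxSet_le {q r : ℕ} (hqr : q.Coprime r) (hr : 0 < r)
    {t : UnitAddCircle} (ht : addOrderOf t = r) (c : UnitAddCircle) {δ : ℝ} (hδ : 0 ≤ δ)
    (x : UnitAddCircle) :
    eventCount (fun j : ℕ ↦ (j • t + ·) ⁻¹' approxSet q c δ) (Finset.range r) x ≤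
      r * volume.real (ball c δ) + 1 := by
  classical
  rw [eventCount_eq_card]
  set s := {j ∈ Finset.range r | x ∈ (j • t + ·) ⁻¹' approxSet q c δ}
  have hlt : ∀ j ∈ s, j < r := fun j hj ↦ Finset.mem_range.1 (Finset.mem_filter.1 hj).1
  have hpack : #s * (r : ℝ)⁻¹ ≤ volume.real (ball c δ) + (r : ℝ)⁻¹ :=
    card_mul_le_volumeReal_ball_add (y := fun j ↦ q • (j • t + x)) hδ
      (inv_nonneg.2 r.cast_nonneg) (Nat.cast_inv_le_one r) (fun j hj ↦ (Finset.mem_filter.1 hj).2)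
      fun i hi j hj hij ↦ inv_le_dist_nsmul_translates hqr hr ht x (hlt i hi) (hlt j hj) hij
  rwa [← div_eq_mul_inv, div_le_iff₀ (by positivity), add_mul, inv_mul_cancel₀ (by positivity),
    mul_comm (volume.real _)] at hpack

lemma volumeReal_approxSet_inter_le {q r : ℕ} (hqr : q.Coprime r) (hq : q ≠ 0) (hr : r ≠ 0)
    (c d : UnitAddCircle) {δ : ℝ} (hδ : 0 ≤ δ) (ε : ℝ) :
    volume.real (approxSet q c δ ∩ approxSet r d ε) ≤
      volume.real (approxSet q c δ) * volume.real (approxSet r d ε) +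
        volume.real (approxSet r d ε) / r := by
  have hr0 : 0 < r := hr.pos
  obtain ⟨t, ht⟩ : ∃ t : UnitAddCircle, addOrderOf t = r :=
    ⟨_, AddCircle.addOrderOf_period_div hr0⟩
  have hinv : ∀ j ∈ Finset.range r, (j • t + ·) ⁻¹' approxSet r d ε = approxSet r d ε := by
    intro j _
    apply preimage_add_approxSet
    rw [smul_comm, ← ht, addOrderOf_nsmul_eq_zero, nsmul_zero]
  have havg := card_mul_measureReal_inter_le_of_translates (μ := volume)
    (measurableSet_approxSet q c δ) (measurableSet_approxSet r d ε) hinv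
    (eventCount_translates_approxSet_le hqr hr0 ht c hδ)
  rw [Finset.card_range, ← le_div_iff₀' (by positivity)] at havg
  rw [volumeReal_approxSet hq]
  refine havg.trans_eq ?_
  field_simp

end Circle

lemma summable_of_summable_min_one_two_mul {ι : Type*} {f : ι → ℝ}
    (h : Summable fun i ↦ min 1 (2 * f i)) : Summable f := by
  have hsmall : ∀ᶠ i in Filter.cofinite, min 1 (2 * f i) < 1 :=
    h.tendsto_cofinite_zero.eventually_lt_const one_pos
  have htwo : Summable fun i ↦ 2 * f i := (summable_congr_cofinite <| by
    filter_upwards [hsmall] with i hi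
    exact min_eq_right (by simpa using hi : 2 * f i < 1).le).1 h
  exact (summable_mul_left_iff two_ne_zero).1 htwo

lemma zero_notMem_of_pairwise_coprime_of_not_summable {A : Set ℕ} (hA : A.Pairwise Nat.Coprime)
    {ψ : ℕ → ℝ} (hdiv : ¬ Summable (A.indicator ψ)) : 0 ∉ A := by
  intro h0
  have hinf : A.Infinite := fun hfin ↦
    hdiv (summable_of_hasFiniteSupport (hfin.subset support_indicator_subset))
  obtain ⟨q, hqA, hq⟩ := hinf.exists_gt 1
  have hq1 : q = 1 := (Nat.coprime_zero_left q).1 (hA h0 hqA (by lia))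
  exact hq.ne' hq1

theorem ae_infinite_dist_nsmul_lt {A : Set ℕ} (hA : A.Pairwise Nat.Coprime) {ψ : ℕ → ℝ}
    (hψ : ∀ q, 0 ≤ ψ q) (hdiv : ¬ Summable (A.indicator ψ)) (c : ℕ → UnitAddCircle) :
    ∀ᵐ x : UnitAddCircle, {q ∈ A | dist (q • x) (c q) < ψ q}.Infinite := by
  have : IsProbabilityMeasure (volume : Measure UnitAddCircle) := ⟨UnitAddCircle.measure_univ⟩
  have hne : ∀ q : A, (q : ℕ) ≠ 0 := fun q h ↦
    zero_notMem_of_pairwise_coprime_of_not_summable hA hdiv (h ▸ q.2)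
  set E : A → Set UnitAddCircle := fun q ↦ approxSet q (c q) (ψ q)
  have hE : ∀ q, MeasurableSet (E q) := fun q ↦ measurableSet_approxSet _ _ _
  have hvar : ∀ s, Var[eventCount E s] ≤ 3 * ∑ q ∈ s, volume.real (E q) :=
    variance_eventCount_le_of_overlap_le hE Subtype.val_injective fun q r hqr ↦
      volumeReal_approxSet_inter_le (hA q.2 r.2 (Subtype.coe_ne_coe.2 hqr)) (hne q) (hne r) _ _
        (hψ q) _
  have hEdiv : ¬ Summable fun q ↦ volume.real (E q) := by
    simp only [E, volumeReal_approxSet (hne _), volumeReal_ball_unitAddCircle _ (hψ _)]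
    exact fun h ↦ hdiv (summable_subtype_iff_indicator.1 (summable_of_summable_min_one_two_mul h))
  filter_upwards [ae_infinite_of_variance_eventCount_le hE hvar hEdiv] with x hx
  refine (hx.image Subtype.val_injective.injOn).mono ?_
  rintro _ ⟨q, hq, rfl⟩
  exact ⟨q.2, hq⟩

lemma dist_coe_unitAddCircle (x y : ℝ) :
    dist (x : UnitAddCircle) (y : UnitAddCircle) = distNearestInt (x - y) := by
  rw [dist_eq_norm, ← AddCircle.coe_sub, UnitAddCircle.norm_eq, distNearestInt]

lemma volume_Icc_setOf_coe_eq_one {p : UnitAddCircle → Prop} (hp : ∀ᵐ x, p x) :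
    volume {α : ℝ | α ∈ Icc (0 : ℝ) 1 ∧ p α} = 1 := by
  have hIcc : ∀ᵐ α : ℝ ∂volume.restrict (Icc 0 1), p α := by
    rw [← restrict_Ioc_eq_restrict_Icc]
    simpa using (UnitAddCircle.measurePreserving_mk 0).quasiMeasurePreserving.ae hp
  calc volume {α : ℝ | α ∈ Icc (0 : ℝ) 1 ∧ p α}
      = volume.restrict (Icc (0 : ℝ) 1) {α : ℝ | p α} := by
        rw [Measure.restrict_apply' measurableSet_Icc, inter_comm]
        rfl
    _ = volume.restrict (Icc (0 : ℝ) 1) univ := measure_congr (Filter.eventuallyEq_univ.2 hIcc)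
    _ = 1 := by simp

theorem stmt1_general {A : Set ℕ} (hA : A.Pairwise Nat.Coprime) {ψ : ℕ → ℝ}
    (hψ : ∀ q, 0 ≤ ψ q) (hdiv : ¬ Summable (A.indicator ψ)) (γ : ℕ → ℝ) :
    volume {α : ℝ | α ∈ Icc (0 : ℝ) 1 ∧
      {q : ℕ | 1 ≤ q ∧ distNearestInt (q * α - γ q) < ψ q}.Infinite} = 1 := by
  simp only [← dist_coe_unitAddCircle, ← nsmul_eq_mul, AddCircle.coe_nsmul]
  refine volume_Icc_setOf_coe_eq_one
    (p := fun x ↦ {q : ℕ | 1 ≤ q ∧ dist (q • x) (γ q : UnitAddCircle) < ψ q}.Infinite) ?_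
  filter_upwards [ae_infinite_dist_nsmul_lt hA hψ hdiv fun q ↦ (γ q : UnitAddCircle)] with x hx
  refine hx.mono ?_
  rintro q ⟨hqA, hq⟩
  exact ⟨Nat.one_le_iff_ne_zero.2 <|
    ne_of_mem_of_not_mem hqA (zero_notMem_of_pairwise_coprime_of_not_summable hA hdiv), hq⟩

theorem stmt1 (γ : ℕ → ℝ) :
    volume {α : ℝ | α ∈ Set.Icc (0:ℝ) 1 ∧
      {q : ℕ | 1 ≤ q ∧ distNearestInt (q * α - γ q) < 1 / q}.Infinite} = 1 :=
  stmt1_general (A := {p | p.Prime}) (fun _ hp _ hq h ↦ (Nat.coprime_primes hp hq).2 h)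
    (ψ := fun q ↦ 1 / q) (fun q ↦ by positivity) not_summable_one_div_on_primes γ
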